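/- arXiv:1012.0952 — 2 statements merged into one kernel-verified Lean document; each statement's English description precedes it below -/
import Mathlib

section
/- There exists N₀ ∈ ℕ such that for all n ≥ N₀ and all natural numbers t ≥ (1 + 4·log log n / log n)·(2n / log n), the following holds: Σ_{d=1}^{n} C(n,d) · c(d)^t ≤ n · 2^{−3t/4}, where c(d) := C(d, d/2) · 2^{−d} if d is even and c(d) := 0 if d is odd. -/
/-!
With base-2 logarithms, write `L = log n` and `K = log L`. Each of the `n` summands is at most
`2 ^ (-3t/4)`. If `d ≤ n / (2 L²)`, then `C(n,d) ≤ n ^ d = 2 ^ (d L)` with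
`d L ≤ n / (2 L) ≤ t / 4`, and `c(d) ≤ 1/2` suffices. Otherwise `C(n,d)` can be as large as about
`2 ^ n`, but `c(d) ≤ d ^ (-1/2) ≤ 2 ^ (-(L - 2K - 1) / 2)`; the correction `4K / L` in the
hypothesis on `t` is what compensates for the loss of `2K`.
-/

open Filter

/-- Equality at `m = 0` and `m = 1` is what lets one bound yield both `c(d) ≤ 1/2` and
`c(d) ≤ d ^ (-1/2)`. -/
lemma centralBinom_sq_mul_le (m : ℕ) : m.centralBinom ^ 2 * (3 * m + 1) ≤ 16 ^ m := by
  induction m with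
  | zero => simp
  | succ m ih =>
    have ratio_le : (2 * m + 1) ^ 2 * (3 * m + 4) ≤ 4 * (m + 1) ^ 2 * (3 * m + 1) := by
      nlinarith
    refine Nat.le_of_mul_le_mul_left ?_ (by positivity : 0 < (m + 1) ^ 2)
    calc (m + 1) ^ 2 * ((m + 1).centralBinom ^ 2 * (3 * (m + 1) + 1))
        = ((m + 1) * (m + 1).centralBinom) ^ 2 * (3 * m + 4) := by ring
      _ = 4 * m.centralBinom ^ 2 * ((2 * m + 1) ^ 2 * (3 * m + 4)) := by
        rw [Nat.succ_mul_centralBinom_succ]; ring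
      _ ≤ 4 * m.centralBinom ^ 2 * (4 * (m + 1) ^ 2 * (3 * m + 1)) := by gcongr
      _ = 16 * (m + 1) ^ 2 * (m.centralBinom ^ 2 * (3 * m + 1)) := by ring
      _ ≤ 16 * (m + 1) ^ 2 * 16 ^ m := by gcongr
      _ = (m + 1) ^ 2 * 16 ^ (m + 1) := by ring

/-- The paper's `c(d)`: the probability that a uniformly random bitstring is equidistant from two
fixed bitstrings at Hamming distance `d`, in closed form. -/
noncomputable def equidistantProb (d : ℕ) : ℝ :=
  if Even d then (d.choose (d / 2) : ℝ) * (2 : ℝ) ^ (-(d : ℝ)) else 0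

lemma equidistantProb_nonneg (d : ℕ) : 0 ≤ equidistantProb d := by
  unfold equidistantProb
  positivity

lemma equidistantProb_of_odd {d : ℕ} (hd : Odd d) : equidistantProb d = 0 :=
  if_neg (Nat.not_even_iff_odd.2 hd)

lemma equidistantProb_two_mul (m : ℕ) :
    equidistantProb (2 * m) = m.centralBinom / 4 ^ m := by
  rw [equidistantProb, if_pos (even_two_mul m), Nat.mul_div_cancel_left m two_pos,
    ← Nat.centralBinom_eq_two_mul_choose, Real.rpow_neg zero_le_two, Real.rpow_natCast, pow_mul,
    div_eq_mul_inv]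
  norm_num

lemma equidistantProb_sq_mul_le_one (d : ℕ) :
    equidistantProb d ^ 2 * (3 * d / 2 + 1) ≤ 1 := by
  rcases Nat.even_or_odd' d with ⟨m, rfl | rfl⟩
  · have h : (m.centralBinom : ℝ) ^ 2 * (3 * m + 1) ≤ 16 ^ m := by
      exact_mod_cast centralBinom_sq_mul_le m
    calc equidistantProb (2 * m) ^ 2 * (3 * (2 * m : ℕ) / 2 + 1)
        = (m.centralBinom : ℝ) ^ 2 * (3 * m + 1) / (4 ^ m) ^ 2 := by
          rw [equidistantProb_two_mul]; push_cast; ring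
      _ ≤ 16 ^ m / (4 ^ m) ^ 2 := by gcongr
      _ = 1 := by rw [pow_right_comm, ← div_pow]; norm_num
  · simp [equidistantProb_of_odd (odd_two_mul_add_one m)]

lemma equidistantProb_le_half {d : ℕ} (hd : d ≠ 0) : equidistantProb d ≤ 1 / 2 := by
  rcases (Nat.one_le_iff_ne_zero.2 hd).eq_or_lt with rfl | hd2
  · rw [equidistantProb_of_odd odd_one]; norm_num
  · have hd2 : (2 : ℝ) ≤ d := by exact_mod_cast hd2
    refine le_of_sq_le_sq ?_ one_half_pos.le
    nlinarith [equidistantProb_sq_mul_le_one d, sq_nonneg (equidistantProb d)]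

lemma equidistantProb_le_two_rpow {d : ℕ} {x : ℝ} (hd : 2 ^ x ≤ (d : ℝ)) :
    equidistantProb d ≤ 2 ^ (-(x / 2)) := by
  refine le_of_sq_le_sq ?_ (by positivity)
  calc equidistantProb d ^ 2 ≤ 1 / 2 ^ x := by
        rw [le_div_iff₀ (by positivity)]
        nlinarith [equidistantProb_sq_mul_le_one d, sq_nonneg (equidistantProb d)]
    _ = (2 ^ (-(x / 2))) ^ 2 := by
        rw [← Real.rpow_mul_natCast zero_le_two, one_div, ← Real.rpow_neg zero_le_two]
        push_cast
        ring_nf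

lemma mul_pow_le_rpow_add_mul {a b c x y : ℝ} (hb : 0 < b) (hc : 0 ≤ c) (hax : a ≤ b ^ x)
    (hcy : c ≤ b ^ y) (t : ℕ) : a * c ^ t ≤ b ^ (x + y * t) := by
  rw [Real.rpow_add hb, Real.rpow_mul_natCast hb.le]
  gcongr

lemma choose_mul_equidistantProb_pow_le_of_le_two_rpow {n d : ℕ} {L : ℝ} (hd : d ≠ 0)
    (hn : (n : ℝ) ≤ 2 ^ L) (t : ℕ) :
    n.choose d * equidistantProb d ^ t ≤ 2 ^ (d * L - t) := by
  have choose_le : (n.choose d : ℝ) ≤ 2 ^ (L * d) :=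
    calc (n.choose d : ℝ) ≤ n ^ d := by exact_mod_cast n.choose_le_pow d
      _ ≤ (2 ^ L) ^ d := by gcongr
      _ = 2 ^ (L * d) := (Real.rpow_mul_natCast zero_le_two L d).symm
  have prob_le : equidistantProb d ≤ 2 ^ (-1 : ℝ) := by
    simpa [Real.rpow_neg_one] using equidistantProb_le_half hd
  convert mul_pow_le_rpow_add_mul two_pos (equidistantProb_nonneg d) choose_le prob_le t using 2
  ring

lemma choose_mul_equidistantProb_pow_le_of_two_rpow_le {d : ℕ} {x : ℝ} (hd : 2 ^ x ≤ (d : ℝ))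
    (n t : ℕ) : n.choose d * equidistantProb d ^ t ≤ 2 ^ (n - t * x / 2) := by
  have choose_le : (n.choose d : ℝ) ≤ 2 ^ (n : ℝ) := by
    rw [Real.rpow_natCast]
    exact_mod_cast n.choose_le_two_pow d
  convert mul_pow_le_rpow_add_mul two_pos (equidistantProb_nonneg d) choose_le
    (equidistantProb_le_two_rpow hd) t using 2
  ring

section Threshold

variable {n t L K : ℝ}

lemma two_mul_div_le_of_threshold_le (hn : 0 ≤ n) (hL : 0 ≤ L) (hK : 0 ≤ K)
    (ht : (1 + 4 * K / L) * (2 * n / L) ≤ t) : 2 * n / L ≤ t :=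
  (le_mul_of_one_le_left (by positivity) (le_add_of_nonneg_right (by positivity))).trans ht

lemma two_mul_le_mul_of_threshold_le (hn : 0 ≤ n) (hK : 3 ≤ K) (hLK : 8 * K ^ 2 ≤ L)
    (ht : (1 + 4 * K / L) * (2 * n / L) ≤ t) : 2 * n ≤ t * (L - 2 * K - 5 / 2) := by
  have hL : 0 < L := by nlinarith
  have gain_nonneg : 0 ≤ L - 2 * K - 5 / 2 := by nlinarith
  have sq_le : L ^ 2 ≤ (L + 4 * K) * (L - 2 * K - 5 / 2) := by
    nlinarith [mul_le_mul_of_nonneg_right hLK (by linarith : 0 ≤ 2 * K - 5 / 2)]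
  calc 2 * n = 2 * n * L ^ 2 / L ^ 2 := by field_simp
    _ ≤ 2 * n * ((L + 4 * K) * (L - 2 * K - 5 / 2)) / L ^ 2 := by gcongr
    _ = (1 + 4 * K / L) * (2 * n / L) * (L - 2 * K - 5 / 2) := by field_simp
    _ ≤ t * (L - 2 * K - 5 / 2) := by gcongr

end Threshold

lemma choose_mul_equidistantProb_pow_le {n d t : ℕ} {L K : ℝ} (hn : (n : ℝ) = 2 ^ L)
    (hL : L = 2 ^ K) (hK : 3 ≤ K) (hLK : 8 * K ^ 2 ≤ L)
    (ht : (1 + 4 * K / L) * (2 * n / L) ≤ (t : ℝ)) (hd : d ≠ 0) :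
    n.choose d * equidistantProb d ^ t ≤ (2 : ℝ) ^ (-(3 * (t : ℝ) / 4)) := by
  have hL0 : 0 < L := hL ▸ by positivity
  rcases le_total (d : ℝ) (n / (2 * L ^ 2)) with hsmall | hlarge
  · have exponent_le : d * L ≤ (t : ℝ) / 4 :=
      calc d * L ≤ n / (2 * L ^ 2) * L := by gcongr
        _ = 2 * n / L / 4 := by field_simp; norm_num
        _ ≤ t / 4 := by
          gcongr
          exact two_mul_div_le_of_threshold_le n.cast_nonneg hL0.le (by linarith) ht
    refine (choose_mul_equidistantProb_pow_le_of_le_two_rpow hd hn.le t).trans ?_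
    exact Real.rpow_le_rpow_of_exponent_le one_le_two (by linarith)
  · have two_rpow_le : (2 : ℝ) ^ (L - 1 - K * 2) ≤ d := by
      rw [Real.rpow_sub two_pos, Real.rpow_sub two_pos, Real.rpow_mul zero_le_two, ← hn, ← hL,
        Real.rpow_one, Real.rpow_two, div_div]
      exact hlarge
    have exponent_le := two_mul_le_mul_of_threshold_le n.cast_nonneg hK hLK ht
    refine (choose_mul_equidistantProb_pow_le_of_two_rpow_le two_rpow_le n t).trans ?_
    exact Real.rpow_le_rpow_of_exponent_le one_le_two (by linarith)

lemma eventually_mul_logb_pow_le (b C : ℝ) (k : ℕ) :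
    ∀ᶠ x in atTop, C * Real.logb b x ^ k ≤ x := by
  have h := ((Real.isLittleO_pow_logb_id_atTop (b := b) (n := k)).const_mul_left C).eventuallyLE
  filter_upwards [h, eventually_ge_atTop 0] with x hx hx0
  exact (le_abs_self _).trans (hx.trans_eq (Real.norm_of_nonneg hx0))

/-- For sufficiently large `n` and `t ≥ (1 + 4 log log n / log n)(2n / log n)`,
`∑_{d=1}^n C(n,d) c(d)^t ≤ n 2^{-3t/4}`, where `c(d) = C(d,d/2) 2^{-d}` for
even `d` and `c(d) = 0` for odd `d`.  Here `log` is the base-2 logarithm. -/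
theorem stmt_8 :
    ∃ N₀ : ℕ, ∀ n : ℕ, n ≥ N₀ →
      ∀ t : ℕ,
        (t : ℝ) ≥ (1 + 4 * Real.logb 2 (Real.logb 2 n) / Real.logb 2 n) *
              (2 * n / Real.logb 2 n) →
        ∑ d ∈ Finset.Icc 1 n, (n.choose d : ℝ) *
            (if Even d then (d.choose (d / 2) : ℝ) * (2 : ℝ) ^ (-(d : ℝ)) else 0) ^ t ≤
          (n : ℝ) * (2 : ℝ) ^ (-(3 * (t : ℝ) / 4)) := by
  have log_tendsto : Tendsto (fun n : ℕ ↦ Real.logb 2 n) atTop atTop :=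
    (Real.tendsto_logb_atTop one_lt_two).comp tendsto_natCast_atTop_atTop
  have loglog_tendsto := (Real.tendsto_logb_atTop one_lt_two).comp log_tendsto
  refine eventually_atTop.1 ?_
  filter_upwards [eventually_gt_atTop 0, log_tendsto.eventually_gt_atTop 0,
    loglog_tendsto.eventually_ge_atTop 3,
    log_tendsto.eventually (eventually_mul_logb_pow_le 2 8 2)]
    with n hn hlog hloglog hsq t ht
  have hn_eq : (n : ℝ) = 2 ^ Real.logb 2 n :=
    (Real.rpow_logb two_pos (by norm_num) (Nat.cast_pos.2 hn)).symm
  have hlog_eq : Real.logb 2 n = 2 ^ Real.logb 2 (Real.logb 2 n) :=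
    (Real.rpow_logb two_pos (by norm_num) hlog).symm
  calc ∑ d ∈ Finset.Icc 1 n, (n.choose d : ℝ) * equidistantProb d ^ t
      ≤ (Finset.Icc 1 n).card • (2 : ℝ) ^ (-(3 * (t : ℝ) / 4)) :=
        Finset.sum_le_card_nsmul _ _ _ fun d hd ↦ choose_mul_equidistantProb_pow_le hn_eq hlog_eq
          hloglog hsq ht (Nat.one_le_iff_ne_zero.1 (Finset.mem_Icc.1 hd).1)
    _ = n * (2 : ℝ) ^ (-(3 * (t : ℝ) / 4)) := by simp
end

section
/- Let n ∈ ℕ, let z : Fin n → Bool, let σ be a permutation of Fin n, and let f = LO_{z,σ}. If (x,y) is a critical pair for f with f(x) > f(y) =: v, then the set of positions on which x and y agree is exactly {σ(0), σ(1), …, σ(v−1)}, i.e., {i : x i = y i} = σ '' {j : j < v}; moreover x and z agree and y and z agree on all these positions. -/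
/-- The LeadingOnes function `LO_{z,σ}(x) = max{m ∈ [0..n] : ∀ j < m, x(σ j) = z(σ j)}`. -/
def leadingOnes {n : ℕ} (z : Fin n → Bool) (σ : Equiv.Perm (Fin n))
    (x : Fin n → Bool) : ℕ :=
  ((Finset.range (n + 1)).filter fun m =>
    ∀ j : Fin n, (j : ℕ) < m → x (σ j) = z (σ j)).sup id

/-- A pair `(x,y)` is critical for `f` if `f x ≥ f y` and the number of
positions where `x` and `y` agree equals `f y`. -/
def IsCriticalPair {n : ℕ} (f : (Fin n → Bool) → ℕ) (x y : Fin n → Bool) : Prop :=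
  f x ≥ f y ∧ (Finset.univ.filter fun i => x i = y i).card = f y

/-! A critical pair `(x, y)` matches `z` on the first `v = f y` positions in the order `σ`: `y` by
the definition of `v`, and `x` because `f x ≥ v`. This accounts for `v` agreements between `x`
and `y`, and criticality allows no further ones. -/

section

variable {n : ℕ} {z x y : Fin n → Bool} {σ : Equiv.Perm (Fin n)}

theorem leadingOnes_le : leadingOnes z σ x ≤ n :=
  Finset.sup_le fun _ hm =>
    Nat.le_of_lt_succ (Finset.mem_range.mp (Finset.mem_of_mem_filter _ hm))

theorem apply_eq_of_lt_leadingOnes {j : Fin n} (hj : (j : ℕ) < leadingOnes z σ x) :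
    x (σ j) = z (σ j) := by
  obtain ⟨m, hm, hjm⟩ := Finset.lt_sup_iff.mp hj
  exact (Finset.mem_filter.mp hm).2 j hjm

theorem ncard_image_setOf_val_lt {α : Type*} {g : Fin n → α} (hg : Function.Injective g) {v : ℕ}
    (hv : v ≤ n) : (g '' {j : Fin n | (j : ℕ) < v}).ncard = v := by
  rw [Set.ncard_image_of_injective _ hg, Set.ncard_eq_toFinset_card',
    Set.toFinset_ofPred, Fin.card_filter_val_lt, min_eq_right hv]

namespace IsCriticalPair

theorem ncard_setOf_apply_eq {f : (Fin n → Bool) → ℕ} (h : IsCriticalPair f x y) :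
    {i | x i = y i}.ncard = f y := by
  rw [Set.ncard_eq_toFinset_card', Set.toFinset_ofPred, h.2]

theorem eq_and_eq_of_lt (h : IsCriticalPair (leadingOnes z σ) x y) {j : Fin n}
    (hj : (j : ℕ) < leadingOnes z σ y) : x (σ j) = z (σ j) ∧ y (σ j) = z (σ j) :=
  ⟨apply_eq_of_lt_leadingOnes (hj.trans_le h.1), apply_eq_of_lt_leadingOnes hj⟩

theorem setOf_apply_eq_eq_image (h : IsCriticalPair (leadingOnes z σ) x y) :
    {i | x i = y i} = σ '' {j : Fin n | (j : ℕ) < leadingOnes z σ y} := by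
  have image_subset : σ '' {j : Fin n | (j : ℕ) < leadingOnes z σ y} ⊆ {i | x i = y i} := by
    rintro _ ⟨j, hj, rfl⟩
    obtain ⟨hx, hy⟩ := h.eq_and_eq_of_lt hj
    exact hx.trans hy.symm
  refine (Set.eq_of_subset_of_ncard_le image_subset ?_).symm
  rw [h.ncard_setOf_apply_eq, ncard_image_setOf_val_lt σ.injective leadingOnes_le]

theorem eq_and_eq_of_apply_eq (h : IsCriticalPair (leadingOnes z σ) x y) {i : Fin n}
    (hi : x i = y i) : x i = z i ∧ y i = z i := by
  obtain ⟨j, hj, rfl⟩ := h.setOf_apply_eq_eq_image.subset hi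
  exact h.eq_and_eq_of_lt hj

end IsCriticalPair

end

/-- If `(x,y)` is a critical pair for `f = LO_{z,σ}` with `f x > f y = v`,
then `x` and `y` agree exactly on the positions `σ(0), …, σ(v-1)`, and on
these positions both agree with `z`. -/
theorem stmt_11 (n : ℕ) (z : Fin n → Bool) (σ : Equiv.Perm (Fin n))
    (x y : Fin n → Bool) (h : IsCriticalPair (leadingOnes z σ) x y)
    (hgt : leadingOnes z σ x > leadingOnes z σ y) (v : ℕ)
    (hv : v = leadingOnes z σ y) :
    {i : Fin n | x i = y i} = σ '' {j : Fin n | (j : ℕ) < v} ∧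
      ∀ i : Fin n, x i = y i → x i = z i ∧ y i = z i := by
  subst hv
  exact ⟨h.setOf_apply_eq_eq_image, fun _ hi => h.eq_and_eq_of_apply_eq hi⟩
end
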